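/- Let S be a finite multiset of colored items with colors in {1,…,Q}. If the color discrepancy of S satisfies δ ≤ 1, then S admits a color-alternating permutation, i.e. there exists a list containing exactly the elements of S (with multiplicity) in which no two consecutive items have the same color. -/

import Mathlib

/-- Number of items of color `q` in the multiset `S`. -/
def countColor {α : Type*} (color : α → ℕ) (S : Multiset α) (q : ℕ) : ℕ :=
  (S.filter (fun x => color x = q)).card

/-- Discrepancy of color `q` in `S`: `|S_q| − (|S| − |S_q|)`. -/
def delta {α : Type*} (color : α → ℕ) (S : Multiset α) (q : ℕ) : ℤ :=
  (countColor color S q : ℤ) - ((Multiset.card S : ℤ) - (countColor color S q : ℤ))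

/-- `S` admits a color-alternating permutation: a list with exactly the elements of `S`
(with multiplicity) in which no two consecutive items have the same color. -/
def HasAlternatingPerm {α : Type*} (color : α → ℕ) (S : Multiset α) : Prop :=
  ∃ l : List α, (l : Multiset α) = S ∧ List.Chain' (fun a b => color a ≠ color b) l

/-!
Order the items greedily: each next color is a most frequent one among the remaining items,
excluding the color just used, which makes up at most half of them. Two distinct colors together
occur at most as often as there are items, so every color other than the chosen one also makes up
at most half of what remained, and the bound `2 |S_q| ≤ |S| + 1` is inherited by the rest. The
chosen color itself makes up at most half of the rest, so the construction never gets stuck.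
-/

section

variable {κ : Type*} [DecidableEq κ]

theorem count_add_count_le_card (M : Multiset κ) {a b : κ} (hab : a ≠ b) :
    M.count a + M.count b ≤ M.card := by
  induction M using Multiset.induction_on with
  | empty => simp
  | cons x M ih =>
    simp only [Multiset.count_cons, Multiset.card_cons]
    grind

theorem exists_mem_ne_of_two_mul_count_le_card {M : Multiset κ} {c : κ} (hM : M ≠ 0)
    (hc : 2 * M.count c ≤ M.card) : ∃ x ∈ M, x ≠ c := by
  by_contra! hall
  have hcount : M.count c = M.card := Multiset.count_eq_card.mpr fun x hx => (hall x hx).symm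
  have hcard : 0 < M.card := Multiset.card_pos.mpr hM
  lia

theorem exists_mem_ne_forall_ne_two_mul_count_le_card {M : Multiset κ} {c : κ} (hM : M ≠ 0)
    (hc : 2 * M.count c ≤ M.card) :
    ∃ x ∈ M, x ≠ c ∧ ∀ a ∈ M, a ≠ x → 2 * M.count a ≤ M.card := by
  obtain ⟨y, hyM, hyc⟩ := exists_mem_ne_of_two_mul_count_le_card hM hc
  have hne : M.filter (· ≠ c) ≠ 0 :=
    fun h => Multiset.filter_eq_nil.mp h y hyM hyc
  obtain ⟨x, hx, hmax⟩ := Multiset.exists_max_image (M.count ·) hne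
  obtain ⟨hxM, hxc⟩ := Multiset.mem_filter.mp hx
  refine ⟨x, hxM, hxc, fun a haM hax => ?_⟩
  obtain rfl | hac := eq_or_ne a c
  · exact hc
  · have hle : M.count a ≤ M.count x := hmax a (Multiset.mem_filter.mpr ⟨haM, hac⟩)
    have hadd : M.count a + M.count x ≤ M.card := count_add_count_le_card M hax
    lia

theorem exists_isChain_cons_ne (M : Multiset κ) (c : κ)
    (hM : ∀ a ∈ M, 2 * M.count a ≤ M.card + 1) (hc : 2 * M.count c ≤ M.card) :
    ∃ l : List κ, (l : Multiset κ) = M ∧ (c :: l).IsChain (· ≠ ·) := by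
  induction M using Multiset.strongInductionOn generalizing c with
  | ih M ih =>
    obtain rfl | hne := eq_or_ne M 0
    · exact ⟨[], rfl, List.isChain_singleton c⟩
    obtain ⟨x, hxM, hxc, hhalf⟩ := exists_mem_ne_forall_ne_two_mul_count_le_card hne hc
    obtain ⟨T, rfl⟩ := Multiset.exists_cons_of_mem hxM
    have hx : 2 * T.count x ≤ T.card := by
      have := hM x hxM
      rw [Multiset.count_cons_self, Multiset.card_cons] at this
      lia
    have hT : ∀ a ∈ T, 2 * T.count a ≤ T.card + 1 := fun a ha => by
      obtain rfl | hax := eq_or_ne a x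
      · lia
      · simpa only [Multiset.count_cons_of_ne hax, Multiset.card_cons] using
          hhalf a (Multiset.mem_cons_of_mem ha) hax
    obtain ⟨l, rfl, hl⟩ := ih T (Multiset.lt_cons_self T x) x hT hx
    exact ⟨x :: l, rfl, hl.cons_cons hxc.symm⟩

end

theorem exists_coe_eq_and_map_eq {α β : Type*} {f : α → β} {S : Multiset α} {l : List β}
    (h : (l : Multiset β) = S.map f) : ∃ l' : List α, (l' : Multiset α) = S ∧ l'.map f = l := by
  induction S using Quotient.inductionOn with
  | h s =>
    have hperm : l.Perm (s.map f) := Multiset.coe_eq_coe.mp h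
    obtain ⟨l', rfl, hl'⟩ : ∃ l', l = List.map f l' ∧ l'.Perm s :=
      (congr_fun₂ (List.eq_map_comp_perm f) l s).mpr hperm
    exact ⟨l', Multiset.coe_eq_coe.mpr hl', rfl⟩

theorem delta_le_one_iff {α : Type*} (color : α → ℕ) (S : Multiset α) (q : ℕ) :
    delta color S q ≤ 1 ↔ 2 * (S.map color).count q ≤ S.card + 1 := by
  have hcount : countColor color S q = (S.map color).count q := by
    simp only [countColor, Multiset.count_map, eq_comm]
  rw [delta, hcount]
  lia

theorem stmt_2_general {α κ : Type*} [DecidableEq κ] (color : α → κ) (S : Multiset α)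
    (hS : ∀ x ∈ S, 2 * (S.map color).count (color x) ≤ S.card + 1) :
    ∃ l : List α, (l : Multiset α) = S ∧ l.IsChain (fun a b => color a ≠ color b) := by
  -- `none` serves as the color of a fictitious item in front of the list, unlike all others.
  let optColor : α → Option κ := fun x => some (color x)
  have hcount (x : α) :
      (S.map optColor).count (some (color x)) = (S.map color).count (color x) := by
    rw [← Multiset.count_map_eq_count' some _ (Option.some_injective κ), Multiset.map_map]
    rfl
  obtain ⟨l, hl, hchain⟩ := exists_isChain_cons_ne (S.map optColor) none
    (by simpa [optColor, hcount] using hS) (by simp [optColor])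
  obtain ⟨l', rfl, rfl⟩ := exists_coe_eq_and_map_eq hl
  refine ⟨l', rfl, ?_⟩
  simpa [optColor, List.isChain_map] using hchain.tail

/-- If the color discrepancy of `S` satisfies `δ ≤ 1` (i.e. `δ_q ≤ 1` for every color
`q ∈ {1,…,Q}`), then `S` admits a color-alternating permutation. -/
theorem stmt_2 {α : Type*} (Q : ℕ) (hQ : 2 ≤ Q) (color : α → ℕ)
    (hcolor : ∀ x, color x ∈ Finset.Icc 1 Q) (S : Multiset α)
    (hdelta : ∀ q ∈ Finset.Icc 1 Q, delta color S q ≤ 1) :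
    HasAlternatingPerm color S := by
  exact stmt_2_general color S fun x _ =>
    (delta_le_one_iff color S (color x)).mp (hdelta (color x) (hcolor x))
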